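/- arXiv:2411.01888 — 2 statements merged into one kernel-verified Lean document; each statement's English description precedes it below -/
import Mathlib

section
/- Let m ≥ 2 be an integer and t > 0. Then for every k ∈ ℕ and every u ∈ [−1,1]: |h_{m,k}^t(u)| ≤ e^{−(k²/3 + k(m−1))t/2} · 2^{21} · (k+m−2)^{3m+5}, and h_{m,k}^t(u) = 0 for k = 0,1,2,3,4,5. -/
/-- The Gegenbauer polynomials `C_l^α`, defined by the recurrence
`C_0^α(u) = 1`, `C_1^α(u) = 2αu`, and
`C_l^α(u) = (2u(l+α−1)C_{l−1}^α(u) − (l+2α−2)C_{l−2}^α(u))/l` for `l ≥ 2`. -/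
noncomputable def gegenbauer (α : ℝ) : ℕ → ℝ → ℝ
  | 0, _ => 1
  | 1, u => 2 * α * u
  | (l + 2), u =>
      (2 * u * (((l : ℝ) + 2) + α - 1) * gegenbauer α (l + 1) u
        - (((l : ℝ) + 2) + 2 * α - 2) * gegenbauer α l u) / ((l : ℝ) + 2)

/-- `c_{m,l}^t(u)`: the coefficient functions of the heat kernel expansion on `ℝP^m`,
zero for `l` odd or `l = 0`. -/
noncomputable def cmt (m : ℕ) (t : ℝ) (l : ℕ) (u : ℝ) : ℝ :=
  if l % 2 = 0 ∧ l ≠ 0 then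
    Real.exp (-((l : ℝ) * ((l : ℝ) + (m : ℝ) - 1)) * t / 2)
      * ((2 * (l : ℝ) + (m : ℝ) - 1) / ((m : ℝ) - 1))
      * gegenbauer (((m : ℝ) - 1) / 2) l u
  else 0

/-- `d_{m,n}^t(u) := Σ_{l=0}^n c_{m,l}^t(u)·c_{m,n−l}^t(u)` (Cauchy product coefficients). -/
noncomputable def dmt (m : ℕ) (t : ℝ) (n : ℕ) (u : ℝ) : ℝ :=
  ∑ l ∈ Finset.range (n + 1), cmt m t l u * cmt m t (n - l) u

/-- `h_{m,k}^t(u) := Σ_{n=0}^k d_{m,n}^t(u)·c_{m,k−n}^t(u)` (triple Cauchy product coefficients). -/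
noncomputable def hmt (m : ℕ) (t : ℝ) (k : ℕ) (u : ℝ) : ℝ :=
  ∑ n ∈ Finset.range (k + 1), dmt m t n u * cmt m t (k - n) u

/-!
For `u = cos θ`, the generating series `∑ C_n^α(u) Xⁿ` and the product of binomial series
`(1 - e^{iθ} X)^{-α} (1 - e^{-iθ} X)^{-α}` solve the same equation
`(1 - 2uX + X²) B' = 2α (u - X) B`, so they agree. Hence `C_n^α(cos θ)` is a nonnegative combination
of the cosines `cos ((i - j) θ)`, `i + j = n`, which gives `|C_n^α| ≤ C_n^α(1)` on `[-1, 1]`; and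
`C_n^α(1)` is the multiset coefficient of `2α` over `n`. In the triple Cauchy product the Gaussian
factors are combined by `(a + b + c)² ≤ 3 (a² + b² + c²)`.
-/

section BinomialSeries

open PowerSeries

variable {R : Type*} [CommRing R] [BinomialRing R]

theorem add_one_mul_multichoose_succ (r : R) (n : ℕ) :
    ((n : R) + 1) * Ring.multichoose r (n + 1) = (r + n) * Ring.multichoose r n := by
  have := BinomialRing.toIsAddTorsionFree (R := R)
  apply nsmul_right_injective n.factorial_ne_zero
  calc n.factorial • (((n : R) + 1) * Ring.multichoose r (n + 1))
      = (n + 1).factorial • Ring.multichoose r (n + 1) := by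
        simp only [nsmul_eq_mul, Nat.factorial_succ]
        push_cast
        ring
    _ = (n.factorial • Ring.multichoose r n) * (r + n) := by
        simp only [Ring.factorial_nsmul_multichoose_eq_ascPochhammer,
          Polynomial.ascPochhammer_smeval_eq_eval, ascPochhammer_succ_eval]
    _ = n.factorial • ((r + n) * Ring.multichoose r n) := by
        rw [smul_mul_assoc, mul_comm]

theorem multichoose_natCast_add_one (q n : ℕ) :
    Ring.multichoose ((q : R) + 1) n = ((n + q).choose n : R) := by
  rw [Ring.multichoose_eq, show (q : R) + 1 + n - 1 = ((n + q : ℕ) : R) by push_cast; ring,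
    Ring.choose_natCast]

theorem multichoose_nonneg [LinearOrder R] [IsStrictOrderedRing R] {r : R} (hr : 0 ≤ r) (n : ℕ) :
    0 ≤ Ring.multichoose r n := by
  induction n with
  | zero => simp
  | succ n ih =>
    refine nonneg_of_mul_nonneg_right ?_ (n.cast_add_one_pos (α := R))
    rw [add_one_mul_multichoose_succ]
    positivity

/-- The binomial series of `(1 - z X) ^ (-r)`, written with multiset coefficients so that no signs
occur. The Gegenbauer generating series is a product of two of these with reciprocal `z`. -/
def negBinomialSeries (r z : R) : R⟦X⟧ :=
  PowerSeries.mk fun n => Ring.multichoose r n * z ^ n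

theorem constantCoeff_negBinomialSeries (r z : R) :
    constantCoeff (negBinomialSeries r z) = 1 := by
  simp [negBinomialSeries, ← coeff_zero_eq_constantCoeff_apply]

theorem one_sub_C_mul_X_mul_derivative_negBinomialSeries (r z : R) :
    (1 - C z * X) * d⁄dX R (negBinomialSeries r z) = C (r * z) * negBinomialSeries r z := by
  ext n
  rw [sub_mul, one_mul, map_sub, mul_assoc, coeff_C_mul, coeff_C_mul, coeff_derivative]
  cases n with
  | zero => simp [negBinomialSeries, mul_comm]
  | succ n =>
    rw [coeff_succ_X_mul, coeff_derivative]
    simp only [negBinomialSeries, coeff_mk]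
    have hrec := add_one_mul_multichoose_succ r (n + 1)
    push_cast at hrec ⊢
    linear_combination z ^ (n + 2) * hrec

theorem derivative_negBinomialSeries_mul (r : R) {z w : R} (hzw : z * w = 1) :
    (1 - C (z + w) * X + X ^ 2) *
        d⁄dX R (negBinomialSeries r z * negBinomialSeries r w) =
      C r * (C (z + w) - 2 * X) * (negBinomialSeries r z * negBinomialSeries r w) := by
  have hz := one_sub_C_mul_X_mul_derivative_negBinomialSeries r z
  have hw := one_sub_C_mul_X_mul_derivative_negBinomialSeries r w
  have hC : C z * C w = 1 := by rw [← map_mul, hzw, map_one]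
  rw [Derivation.leibniz, smul_eq_mul, smul_eq_mul, map_add]
  rw [map_mul] at hz hw
  set P := negBinomialSeries r z
  set Q := negBinomialSeries r w
  linear_combination (1 - C w * X) * Q * hz + (1 - C z * X) * P * hw -
    (X ^ 2 * (P * d⁄dX R Q + Q * d⁄dX R P) + 2 * C r * X * P * Q) * hC

end BinomialSeries

section Gegenbauer

open PowerSeries Finset

theorem add_two_mul_gegenbauer_add_two (α : ℝ) (n : ℕ) (u : ℝ) :
    ((n : ℝ) + 2) * gegenbauer α (n + 2) u =
      2 * u * (n + 1 + α) * gegenbauer α (n + 1) u - (n + 2 * α) * gegenbauer α n u := by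
  have hn : (n : ℝ) + 2 ≠ 0 := by positivity
  rw [gegenbauer, mul_div_cancel₀ _ hn]
  ring

theorem coeff_eq_gegenbauer_of_derivative_eq {α u : ℝ} {B : ℂ⟦X⟧} (hB₀ : constantCoeff B = 1)
    (hB : (1 - C (2 * u : ℂ) * X + X ^ 2) * d⁄dX ℂ B =
      C (α : ℂ) * (C (2 * u : ℂ) - 2 * X) * B)
    (n : ℕ) : coeff n B = gegenbauer α n u := by
  have hexpand : d⁄dX ℂ B - C (2 * u : ℂ) * (X * d⁄dX ℂ B) +
      X * (X * d⁄dX ℂ B) = C (2 * α * u : ℂ) * B - C (2 * α : ℂ) * (X * B) := by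
    have h2 : C (2 : ℂ) = 2 := map_ofNat C 2
    simp only [map_mul, h2] at hB ⊢
    linear_combination hB
  have coeff_X_mul_derivative (n : ℕ) : coeff n (X * d⁄dX ℂ B) = n * coeff n B := by
    cases n with
    | zero => simp
    | succ n => rw [coeff_succ_X_mul, coeff_derivative, mul_comm]; push_cast; rfl
  induction n using Nat.twoStepInduction with
  | zero => simp [gegenbauer, hB₀]
  | one =>
    have h := congrArg (coeff 0) hexpand
    simp only [map_add, map_sub, coeff_C_mul, coeff_derivative, coeff_zero_X_mul] at h
    simpa [hB₀, gegenbauer] using h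
  | more n ih₀ ih₁ =>
    have h := congrArg (coeff (n + 1)) hexpand
    simp only [map_add, map_sub, coeff_C_mul, coeff_succ_X_mul, coeff_derivative,
      coeff_X_mul_derivative, ih₀, ih₁] at h
    have hrec := congrArg ((↑) : ℝ → ℂ) (add_two_mul_gegenbauer_add_two α n u)
    have hn : (n : ℂ) + 2 ≠ 0 := by exact_mod_cast (n + 1).succ_ne_zero
    apply mul_left_cancel₀ hn
    push_cast at h hrec
    linear_combination h - hrec

theorem gegenbauer_cos (α θ : ℝ) (n : ℕ) :
    gegenbauer α n (Real.cos θ) = ∑ p ∈ antidiagonal n,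
      Ring.multichoose α p.1 * Ring.multichoose α p.2 * Real.cos ((p.1 - p.2) * θ) := by
  set z := Complex.exp (θ * Complex.I)
  set w := Complex.exp (-θ * Complex.I)
  have hzw : z * w = 1 := by simp [z, w, ← Complex.exp_add]
  have hadd : z + w = 2 * (Real.cos θ : ℂ) := by
    rw [Complex.ofReal_cos, Complex.two_cos]
  have hcast (i : ℕ) : Ring.multichoose (α : ℂ) i = (Ring.multichoose α i : ℝ) :=
    (Ring.map_multichoose Complex.ofRealHom α i).symm
  have hode := derivative_negBinomialSeries_mul (α : ℂ) hzw
  rw [hadd] at hode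
  have hcoeff := coeff_eq_gegenbauer_of_derivative_eq
    (by simp only [map_mul, constantCoeff_negBinomialSeries, mul_one]) hode n
  have hterm (p : ℕ × ℕ) : (Ring.multichoose (α : ℂ) p.1 * z ^ p.1) *
      (Ring.multichoose (α : ℂ) p.2 * w ^ p.2) =
      ((Ring.multichoose α p.1 * Ring.multichoose α p.2 : ℝ) : ℂ) *
        Complex.exp (((p.1 - p.2) * θ : ℝ) * Complex.I) := by
    have hexp : z ^ p.1 * w ^ p.2 = Complex.exp (((p.1 - p.2) * θ : ℝ) * Complex.I) := by
      rw [← Complex.exp_nat_mul, ← Complex.exp_nat_mul, ← Complex.exp_add]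
      push_cast
      ring_nf
    rw [hcast, hcast, ← hexp]
    push_cast
    ring
  rw [← Complex.ofReal_re (gegenbauer α n (Real.cos θ)), ← hcoeff, coeff_mul, Complex.re_sum]
  simp only [negBinomialSeries, coeff_mk, hterm, Complex.re_ofReal_mul,
    Complex.exp_ofReal_mul_I_re]

theorem gegenbauer_one_right (α : ℝ) (n : ℕ) :
    gegenbauer α n 1 = Ring.multichoose (2 * α) n := by
  have hrec (n : ℕ) : ((n : ℝ) + 1) * gegenbauer α (n + 1) 1 = (2 * α + n) * gegenbauer α n 1 := by
    induction n with
    | zero => simp [gegenbauer]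
    | succ n ih =>
      push_cast
      linear_combination ih + add_two_mul_gegenbauer_add_two α n 1
  induction n with
  | zero => simp [gegenbauer]
  | succ n ih =>
    have hn : (n : ℝ) + 1 ≠ 0 := by positivity
    apply mul_left_cancel₀ hn
    rw [hrec, ih, add_one_mul_multichoose_succ]

theorem abs_gegenbauer_le_gegenbauer_one {α : ℝ} (hα : 0 ≤ α) (n : ℕ) {u : ℝ}
    (hu : u ∈ Set.Icc (-1 : ℝ) 1) : |gegenbauer α n u| ≤ gegenbauer α n 1 := by
  have hone := gegenbauer_cos α 0 n
  rw [Real.cos_zero] at hone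
  rw [← Real.cos_arccos hu.1 hu.2, gegenbauer_cos, hone]
  refine (abs_sum_le_sum_abs _ _).trans (sum_le_sum fun p _ => ?_)
  have hcoeff : 0 ≤ Ring.multichoose α p.1 * Ring.multichoose α p.2 :=
    mul_nonneg (multichoose_nonneg hα _) (multichoose_nonneg hα _)
  rw [mul_zero, Real.cos_zero, abs_mul, abs_of_nonneg hcoeff]
  exact mul_le_mul_of_nonneg_left (Real.abs_cos_le_one _) hcoeff

theorem abs_gegenbauer_half_natCast_add_one_le (q n : ℕ) {u : ℝ} (hu : u ∈ Set.Icc (-1 : ℝ) 1) :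
    |gegenbauer ((q + 1) / 2) n u| ≤ ((n : ℝ) + q) ^ q := by
  calc |gegenbauer ((q + 1) / 2) n u|
      ≤ gegenbauer ((q + 1) / 2) n 1 := abs_gegenbauer_le_gegenbauer_one (by positivity) n hu
    _ = ((n + q).choose q : ℝ) := by
        rw [gegenbauer_one_right, mul_div_cancel₀ _ two_ne_zero, multichoose_natCast_add_one,
          Nat.choose_symm_add]
    _ ≤ ((n : ℝ) + q) ^ q := by exact_mod_cast Nat.choose_le_pow (n + q) q

end Gegenbauer

section CauchyProduct

open Finset

theorem norm_sum_antidiagonal_antidiagonal_le {E : Type*} [SeminormedAddCommGroup E] {k : ℕ}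
    {f : ℕ → ℕ → ℕ → E} {T : ℝ} (hf : ∀ a b c, a + b + c = k → ‖f a b c‖ ≤ T) :
    ‖∑ p ∈ antidiagonal k, ∑ q ∈ antidiagonal p.1, f q.1 q.2 p.2‖ ≤ ((k : ℝ) + 1) ^ 2 * T := by
  have hT : 0 ≤ T := (norm_nonneg _).trans (hf k 0 0 rfl)
  have hinner : ∀ p ∈ antidiagonal k,
      ‖∑ q ∈ antidiagonal p.1, f q.1 q.2 p.2‖ ≤ ((k : ℝ) + 1) * T := by
    intro p hp
    calc ‖∑ q ∈ antidiagonal p.1, f q.1 q.2 p.2‖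
        ≤ ∑ _q ∈ antidiagonal p.1, T := norm_sum_le_of_le _ fun q hq =>
          hf _ _ _ (by rw [mem_antidiagonal.mp hq, mem_antidiagonal.mp hp])
      _ = ((p.1 : ℝ) + 1) * T := by
          rw [sum_const, Nat.card_antidiagonal, nsmul_eq_mul, Nat.cast_add_one]
      _ ≤ ((k : ℝ) + 1) * T := by gcongr; exact Nat.le.intro (mem_antidiagonal.mp hp)
  calc ‖∑ p ∈ antidiagonal k, ∑ q ∈ antidiagonal p.1, f q.1 q.2 p.2‖
      ≤ ∑ _p ∈ antidiagonal k, ((k : ℝ) + 1) * T := norm_sum_le_of_le _ hinner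
    _ = ((k : ℝ) + 1) ^ 2 * T := by
        rw [sum_const, Nat.card_antidiagonal, nsmul_eq_mul, Nat.cast_add_one, sq, mul_assoc]

theorem hmt_eq_sum_antidiagonal (m : ℕ) (t : ℝ) (k : ℕ) (u : ℝ) :
    hmt m t k u = ∑ p ∈ antidiagonal k, ∑ q ∈ antidiagonal p.1,
      cmt m t q.1 u * cmt m t q.2 u * cmt m t p.2 u := by
  simp only [hmt, dmt, Nat.sum_antidiagonal_eq_sum_range_succ_mk, sum_mul]

theorem cmt_eq_zero_of_lt_two (m : ℕ) (t : ℝ) {l : ℕ} (hl : l < 2) (u : ℝ) : cmt m t l u = 0 :=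
  if_neg (by omega)

theorem hmt_eq_zero_of_lt_six (m : ℕ) (t : ℝ) {k : ℕ} (hk : k < 6) (u : ℝ) : hmt m t k u = 0 := by
  rw [hmt_eq_sum_antidiagonal]
  refine sum_eq_zero fun p hp => sum_eq_zero fun q hq => ?_
  rw [HasAntidiagonal.mem_antidiagonal] at hp hq
  obtain h | h | h : q.1 < 2 ∨ q.2 < 2 ∨ p.2 < 2 := by omega
  all_goals simp [cmt_eq_zero_of_lt_two m t h u]

end CauchyProduct

section HeatCoefficients

theorem exp_mul_exp_mul_exp_le {t : ℝ} (ht : 0 ≤ t) (x y z m : ℝ) :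
    Real.exp (-(x * (x + m - 1)) * t / 2) * Real.exp (-(y * (y + m - 1)) * t / 2) *
        Real.exp (-(z * (z + m - 1)) * t / 2) ≤
      Real.exp (-((x + y + z) ^ 2 / 3 + (x + y + z) * (m - 1)) * t / 2) := by
  have hsq : (x + y + z) ^ 2 / 3 ≤ x ^ 2 + y ^ 2 + z ^ 2 := by
    linarith [sq_nonneg (x - y), sq_nonneg (x - z), sq_nonneg (y - z)]
  rw [← Real.exp_add, ← Real.exp_add, Real.exp_le_exp]
  linarith [mul_le_mul_of_nonneg_right hsq ht]

theorem abs_cmt_le {m : ℕ} (hm : 2 ≤ m) (t : ℝ) (l : ℕ) {u : ℝ} (hu : u ∈ Set.Icc (-1 : ℝ) 1) :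
    |cmt m t l u| ≤ Real.exp (-((l : ℝ) * ((l : ℝ) + (m : ℝ) - 1)) * t / 2) *
      (3 * ((l : ℝ) + (m : ℝ) - 2) ^ (m - 1)) := by
  obtain ⟨q, rfl⟩ := Nat.exists_eq_add_of_le' hm
  have hpred : ((q + 2 : ℕ) : ℝ) - 1 = q + 1 := by push_cast; ring
  have hbase : (l : ℝ) + (q + 2 : ℕ) - 2 = l + q := by push_cast; ring
  rw [hbase, show q + 2 - 1 = q + 1 from rfl]
  unfold cmt
  split_ifs with hl
  · have hfactor : (2 * (l : ℝ) + (q + 2 : ℕ) - 1) / (q + 1) ≤ 3 * (l + q) := by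
      have hl1 : (1 : ℝ) ≤ l := by exact_mod_cast Nat.one_le_iff_ne_zero.mpr hl.2
      rw [div_le_iff₀ (by positivity), add_sub_assoc, hpred]
      nlinarith [q.cast_nonneg (α := ℝ)]
    have hfactor_nonneg : 0 ≤ (2 * (l : ℝ) + (q + 2 : ℕ) - 1) / (q + 1) := by
      rw [add_sub_assoc, hpred]
      positivity
    rw [hpred, mul_assoc, abs_mul, abs_mul, Real.abs_exp, abs_of_nonneg hfactor_nonneg, pow_succ',
      ← mul_assoc 3]
    gcongr
    exact abs_gegenbauer_half_natCast_add_one_le q l hu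
  · rw [abs_zero]
    positivity

theorem abs_cmt_mul_cmt_mul_cmt_le {m : ℕ} (hm : 2 ≤ m) {t : ℝ} (ht : 0 ≤ t) {a b c k : ℕ}
    (hk : a + b + c = k) {u : ℝ} (hu : u ∈ Set.Icc (-1 : ℝ) 1) :
    |cmt m t a u * cmt m t b u * cmt m t c u| ≤
      Real.exp (-((k : ℝ) ^ 2 / 3 + (k : ℝ) * ((m : ℝ) - 1)) * t / 2) *
        (27 * ((k : ℝ) + (m : ℝ) - 2) ^ (3 * (m - 1))) := by
  have hm' : (2 : ℝ) ≤ m := by exact_mod_cast hm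
  set K : ℝ := (k : ℝ) + m - 2 with hK
  have hK0 : 0 ≤ K := by linarith [k.cast_nonneg (α := ℝ)]
  have hcmt {l : ℕ} (hl : l ≤ k) : |cmt m t l u| ≤
      Real.exp (-((l : ℝ) * ((l : ℝ) + (m : ℝ) - 1)) * t / 2) * (3 * K ^ (m - 1)) := by
    refine (abs_cmt_le hm t l hu).trans ?_
    have : 0 ≤ (l : ℝ) + m - 2 := by linarith [l.cast_nonneg (α := ℝ)]
    rw [hK]
    gcongr
  have hexp := exp_mul_exp_mul_exp_le ht a b c m
  rw [show (a : ℝ) + b + c = k by exact_mod_cast hk] at hexp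
  rw [abs_mul, abs_mul]
  calc |cmt m t a u| * |cmt m t b u| * |cmt m t c u|
      ≤ (Real.exp (-((a : ℝ) * (a + m - 1)) * t / 2) * (3 * K ^ (m - 1))) *
          (Real.exp (-((b : ℝ) * (b + m - 1)) * t / 2) * (3 * K ^ (m - 1))) *
          (Real.exp (-((c : ℝ) * (c + m - 1)) * t / 2) * (3 * K ^ (m - 1))) := by
        gcongr <;> exact hcmt (by omega)
    _ = Real.exp (-((a : ℝ) * (a + m - 1)) * t / 2) * Real.exp (-((b : ℝ) * (b + m - 1)) * t / 2) *
          Real.exp (-((c : ℝ) * (c + m - 1)) * t / 2) * (27 * K ^ (3 * (m - 1))) := by ring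
    _ ≤ Real.exp (-((k : ℝ) ^ 2 / 3 + k * (m - 1)) * t / 2) * (27 * K ^ (3 * (m - 1))) := by gcongr

theorem abs_hmt_le {m : ℕ} (hm : 2 ≤ m) {t : ℝ} (ht : 0 ≤ t) (k : ℕ) {u : ℝ}
    (hu : u ∈ Set.Icc (-1 : ℝ) 1) :
    |hmt m t k u| ≤ Real.exp (-((k : ℝ) ^ 2 / 3 + (k : ℝ) * ((m : ℝ) - 1)) * t / 2) *
      (27 * ((k : ℝ) + 1) ^ 2 * ((k : ℝ) + (m : ℝ) - 2) ^ (3 * (m - 1))) := by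
  rw [hmt_eq_sum_antidiagonal]
  refine (norm_sum_antidiagonal_antidiagonal_le
    (f := fun a b c => cmt m t a u * cmt m t b u * cmt m t c u)
    fun a b c habc => abs_cmt_mul_cmt_mul_cmt_le hm ht habc hu).trans_eq ?_
  ring

theorem add_one_sq_mul_pow_le {m : ℕ} (hm : 2 ≤ m) (k : ℕ) :
    27 * ((k : ℝ) + 1) ^ 2 * ((k : ℝ) + (m : ℝ) - 2) ^ (3 * (m - 1)) ≤
      2 ^ 21 * ((k : ℝ) + (m : ℝ) - 2) ^ (3 * m + 5) := by
  obtain ⟨q, rfl⟩ := Nat.exists_eq_add_of_le' hm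
  have hbase : (k : ℝ) + (q + 2 : ℕ) - 2 = (k + q : ℕ) := by push_cast; ring
  rw [hbase]
  obtain hzero | hpos := (k + q).eq_zero_or_pos
  · simp [hzero]
  have hone : (1 : ℝ) ≤ (k + q : ℕ) := by exact_mod_cast hpos
  have hk : (k : ℝ) + 1 ≤ 2 * (k + q : ℕ) := by exact_mod_cast (by omega : k + 1 ≤ 2 * (k + q))
  calc 27 * ((k : ℝ) + 1) ^ 2 * ((k + q : ℕ) : ℝ) ^ (3 * (q + 2 - 1))
      ≤ 27 * (2 * ((k + q : ℕ) : ℝ)) ^ 2 * ((k + q : ℕ) : ℝ) ^ (3 * (q + 2 - 1)) := by gcongr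
    _ = 108 * ((k + q : ℕ) : ℝ) ^ (2 + 3 * (q + 2 - 1)) := by rw [pow_add]; ring
    _ ≤ 2 ^ 21 * ((k + q : ℕ) : ℝ) ^ (3 * (q + 2) + 5) := by
        gcongr ?_ * ?_
        · norm_num
        · exact pow_le_pow_right₀ hone (by omega)

end HeatCoefficients

/-- For an integer `m ≥ 2` and `t > 0`: for every `k ∈ ℕ` and `u ∈ [−1,1]`,
`|h_{m,k}^t(u)| ≤ e^{−(k²/3+k(m−1))t/2}·2^{21}·(k+m−2)^{3m+5}`, and
`h_{m,k}^t = 0` for `k = 0,1,2,3,4,5`. -/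
theorem hmt_bound (m : ℕ) (hm : 2 ≤ m) (t : ℝ) (ht : 0 < t) :
    (∀ k : ℕ, ∀ u ∈ Set.Icc (-1 : ℝ) 1,
      |hmt m t k u| ≤ Real.exp (-(((k : ℝ)^2 / 3) + (k : ℝ) * ((m : ℝ) - 1)) * t / 2)
        * 2^21 * ((k : ℝ) + (m : ℝ) - 2)^(3 * m + 5)) ∧
    (∀ u ∈ Set.Icc (-1 : ℝ) 1, ∀ k : ℕ, k ≤ 5 → hmt m t k u = 0) := by
  refine ⟨fun k u hu => ?_, fun u _ k hk => hmt_eq_zero_of_lt_six m t (Nat.lt_succ_of_le hk) u⟩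
  rw [mul_assoc]
  exact (abs_hmt_le hm ht.le k hu).trans
    (mul_le_mul_of_nonneg_left (add_one_sq_mul_pow_le hm k) (Real.exp_nonneg _))
end

section
/- Let m ≥ 2 be an integer, r_m := √(2(m+1)/m), and define Φ(x) := (1/2)·√(m/(2(m+1)))·F_m(x,x) for x ∈ ℝ^{m+1}. Let (Ω, F, P) be a probability space and X : Ω → ℝ^{m+1} a random vector with ‖X‖ = r_m almost surely. Then for vectors y ∈ ℝ^{m+1} with ‖y‖ = r_m, the set of maximizers of y ↦ E[⟨X,y⟩²] over the sphere {y : ‖y‖ = r_m} equals the set of minimizers of y ↦ E[‖Φ(X) − Φ(y)‖²] over that sphere. -/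
open RealInnerProductSpace

/-- Dimension of the target of `F_{k+1}`: `dimF k = (k+1)(k+4)/2`. -/
def dimF : ℕ → ℕ
  | 0 => 2
  | (k + 1) => dimF k + (k + 3)

/-- The recursively defined maps `F_{k+1} : ℝ^{k+2} × ℝ^{k+2} → ℝ^{(k+1)(k+4)/2}`
(indexed so that `F k` is the map called `F_{k+1}` in the paper, i.e. `F_m = F (m-1)`):
`F_1((x₁,x₂),(y₁,y₂)) = (x₁y₁ − x₂y₂, x₁y₂ + x₂y₁)` and
`F_{m+1}((x,x_{m+2}),(y,y_{m+2}))
  = (F_m(x,y), x_{m+2}y + y_{m+2}x, τ_{m+1}(⟨x,y⟩ − (m+1)x_{m+2}y_{m+2}))`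
with `τ_{m+1} = √(2/((m+1)(m+2)))`. -/
noncomputable def F : (k : ℕ) → (Fin (k + 2) → ℝ) → (Fin (k + 2) → ℝ) → (Fin (dimF k) → ℝ)
  | 0, x, y => ![x 0 * y 0 - x 1 * y 1, x 0 * y 1 + x 1 * y 0]
  | (k + 1), x, y =>
      Fin.append (m := dimF k + (k + 2)) (n := 1)
        (Fin.append
          (F k (fun i => x i.castSucc) (fun i => y i.castSucc))
          (fun i : Fin (k + 2) =>
            x (Fin.last (k + 2)) * y i.castSucc + y (Fin.last (k + 2)) * x i.castSucc))
        (fun _ : Fin 1 =>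
          Real.sqrt (2 / (((k : ℝ) + 2) * ((k : ℝ) + 3))) *
            ((∑ i : Fin (k + 2), x i.castSucc * y i.castSucc)
              - ((k : ℝ) + 2) * x (Fin.last (k + 2)) * y (Fin.last (k + 2))))

/-- The canonical identification of `Fin n → ℝ` with Euclidean space (used for norms
and inner products). -/
noncomputable def toE {n : ℕ} (v : Fin n → ℝ) : EuclideanSpace ℝ (Fin n) :=
  (EuclideanSpace.equiv (Fin n) ℝ).symm v

open MeasureTheory

/-- The isometric embedding `Φ(x) = (1/2)√(m/(2(m+1)))·F_m(x,x)` (with `m = k+2`),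
viewed as a map into Euclidean space. -/
noncomputable def Phi (k : ℕ) (v : Fin (k + 3) → ℝ) : EuclideanSpace ℝ (Fin (dimF (k + 1))) :=
  ((1 : ℝ)/2 * Real.sqrt (((k : ℝ) + 2) / (2 * ((k : ℝ) + 3)))) • toE (F (k + 1) v v)

/-! On `ℝⁿ` the maps `F` satisfy
`⟨F(x, x'), F(y, y')⟩ = ⟨x, y⟩⟨x', y'⟩ + ⟨x, y'⟩⟨x', y⟩ - (2 / n)⟨x, x'⟩⟨y, y'⟩`,
the constants `τ` being exactly what carries this identity from `n` to `n + 1`. Hence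
`⟨Φ(x), Φ(y)⟩ = a⟨x, y⟩² + b‖x‖²‖y‖²` with `a > 0`, so that on a sphere `E‖Φ(X) - Φ(y)‖²` is a
constant minus `2a E⟨X, y⟩²`. -/

section DotProduct

theorem append_dotProduct_append {R : Type*} [NonUnitalNonAssocSemiring R] {m n : ℕ}
    (u u' : Fin m → R) (v v' : Fin n → R) :
    Fin.append u v ⬝ᵥ Fin.append u' v' = u ⬝ᵥ u' + v ⬝ᵥ v' := by
  simp only [dotProduct, Fin.sum_univ_add, Fin.append_left, Fin.append_right]

theorem dotProduct_eq_init_add_last {R : Type*} [NonUnitalNonAssocSemiring R] {n : ℕ}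
    (x y : Fin (n + 1) → R) :
    x ⬝ᵥ y = (Fin.init x : Fin n → R) ⬝ᵥ Fin.init y + x (Fin.last n) * y (Fin.last n) :=
  Fin.sum_univ_castSucc _

theorem smul_add_smul_dotProduct_smul_add_smul {R ι : Type*} [CommSemiring R] [Fintype ι]
    (a a' b b' : R) (x x' y y' : ι → R) :
    (a • x' + a' • x) ⬝ᵥ (b • y' + b' • y) =
      a * b * (x' ⬝ᵥ y') + a * b' * (x' ⬝ᵥ y) + a' * b * (x ⬝ᵥ y') + a' * b' * (x ⬝ᵥ y) := by
  simp only [add_dotProduct, dotProduct_add, smul_dotProduct, dotProduct_smul, smul_eq_mul]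
  ring

end DotProduct

section Kernel

theorem F_zero_dotProduct_F_zero (x x' y y' : Fin 2 → ℝ) :
    F 0 x x' ⬝ᵥ F 0 y y' =
      (x ⬝ᵥ y) * (x' ⬝ᵥ y') + (x ⬝ᵥ y') * (x' ⬝ᵥ y) - (x ⬝ᵥ x') * (y ⬝ᵥ y') := by
  refine (Fin.sum_univ_two _).trans ?_
  simp only [F, dotProduct, Fin.sum_univ_two, Matrix.cons_val_zero, Matrix.cons_val_one]
  ring

theorem F_succ_dotProduct_F_succ (k : ℕ) (x x' y y' : Fin (k + 3) → ℝ) :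
    F (k + 1) x x' ⬝ᵥ F (k + 1) y y' =
      F k (Fin.init x) (Fin.init x') ⬝ᵥ F k (Fin.init y) (Fin.init y')
        + (x (Fin.last _) • Fin.init x' + x' (Fin.last _) • Fin.init x : Fin (k + 2) → ℝ) ⬝ᵥ
            (y (Fin.last _) • Fin.init y' + y' (Fin.last _) • Fin.init y)
        + 2 / (((k : ℝ) + 2) * ((k : ℝ) + 3))
          * ((Fin.init x : Fin (k + 2) → ℝ) ⬝ᵥ Fin.init x'
              - ((k : ℝ) + 2) * x (Fin.last _) * x' (Fin.last _))
          * ((Fin.init y : Fin (k + 2) → ℝ) ⬝ᵥ Fin.init y'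
              - ((k : ℝ) + 2) * y (Fin.last _) * y' (Fin.last _)) := by
  have sq_tau := Real.mul_self_sqrt (show 0 ≤ 2 / (((k : ℝ) + 2) * ((k : ℝ) + 3)) by positivity)
  refine (append_dotProduct_append _ _ _ _).trans ?_
  rw [append_dotProduct_append]
  congr 1
  rw [dotProduct, Fin.sum_univ_one, mul_mul_mul_comm, sq_tau, ← mul_assoc]
  rfl

theorem F_dotProduct_F (k : ℕ) (x x' y y' : Fin (k + 2) → ℝ) :
    F k x x' ⬝ᵥ F k y y' =
      (x ⬝ᵥ y) * (x' ⬝ᵥ y') + (x ⬝ᵥ y') * (x' ⬝ᵥ y)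
        - 2 / ((k : ℝ) + 2) * (x ⬝ᵥ x') * (y ⬝ᵥ y') := by
  induction k with
  | zero => simpa using F_zero_dotProduct_F_zero x x' y y'
  | succ k ih =>
    rw [F_succ_dotProduct_F_succ, ih, smul_add_smul_dotProduct_smul_add_smul]
    simp only [dotProduct_eq_init_add_last x, dotProduct_eq_init_add_last x',
      dotProduct_eq_init_add_last y, Nat.cast_add_one]
    field_simp
    ring

end Kernel

section SqInnerKernel

variable {E H : Type*} [NormedAddCommGroup E] [InnerProductSpace ℝ E]
  [NormedAddCommGroup H] [InnerProductSpace ℝ H] {ψ : E → H} {a b : ℝ}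

/-- `ψ` is a feature map of the kernel `a⟨x, y⟩² + b‖x‖²‖y‖²`, the property of `x ↦ F k x x`
from which the distances `‖ψ x - ψ y‖` are computed. -/
def HasSqInnerKernel (ψ : E → H) (a b : ℝ) : Prop :=
  ∀ x y, ⟪ψ x, ψ y⟫ = a * ⟪x, y⟫ ^ 2 + b * ‖x‖ ^ 2 * ‖y‖ ^ 2

namespace HasSqInnerKernel

theorem const_smul (hψ : HasSqInnerKernel ψ a b) (c : ℝ) :
    HasSqInnerKernel (fun x => c • ψ x) (c ^ 2 * a) (c ^ 2 * b) := fun x y => by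
  rw [real_inner_smul_left, real_inner_smul_right, hψ x y]
  ring

theorem norm_sub_sq (hψ : HasSqInnerKernel ψ a b) (x y : E) :
    ‖ψ x - ψ y‖ ^ 2 =
      (a + b) * (‖x‖ ^ 4 + ‖y‖ ^ 4) - 2 * b * ‖y‖ ^ 2 * ‖x‖ ^ 2 - 2 * a * ⟪x, y⟫ ^ 2 := by
  rw [norm_sub_sq_real, ← real_inner_self_eq_norm_sq (ψ x), ← real_inner_self_eq_norm_sq (ψ y),
    hψ x x, hψ y y, hψ x y, real_inner_self_eq_norm_sq, real_inner_self_eq_norm_sq]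
  ring

variable {Ω : Type*} [MeasurableSpace Ω] {μ : Measure Ω} [IsFiniteMeasure μ] {X : Ω → E}

theorem integral_norm_sub_sq (hψ : HasSqInnerKernel ψ a b) (hX : MemLp X 4 μ) (y : E) :
    ∫ ω, ‖ψ (X ω) - ψ y‖ ^ 2 ∂μ =
      ∫ ω, ((a + b) * (‖X ω‖ ^ 4 + ‖y‖ ^ 4) - 2 * b * ‖y‖ ^ 2 * ‖X ω‖ ^ 2) ∂μ
        - 2 * a * ∫ ω, ⟪X ω, y⟫ ^ 2 ∂μ := by
  have hX₂ : MemLp X 2 μ := hX.mono_exponent (by norm_num)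
  have int_norm_pow_four : Integrable (fun ω => ‖X ω‖ ^ 4) μ := MemLp.integrable_norm_pow' hX
  have int_norm_sq : Integrable (fun ω => ‖X ω‖ ^ 2) μ := MemLp.integrable_norm_pow' hX₂
  have int_inner_sq : Integrable (fun ω => ⟪X ω, y⟫ ^ 2) μ := (hX₂.inner_const y).integrable_sq
  simp only [hψ.norm_sub_sq]
  rw [integral_sub _ (int_inner_sq.const_mul _), integral_const_mul]
  exact ((int_norm_pow_four.add (integrable_const _)).const_mul _).sub (int_norm_sq.const_mul _)

theorem integral_norm_sub_sq_le_iff (hψ : HasSqInnerKernel ψ a b) (ha : 0 < a)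
    (hX : MemLp X 4 μ) {y z : E} (hyz : ‖y‖ = ‖z‖) :
    ∫ ω, ‖ψ (X ω) - ψ y‖ ^ 2 ∂μ ≤ ∫ ω, ‖ψ (X ω) - ψ z‖ ^ 2 ∂μ ↔
      ∫ ω, ⟪X ω, z⟫ ^ 2 ∂μ ≤ ∫ ω, ⟪X ω, y⟫ ^ 2 ∂μ := by
  rw [hψ.integral_norm_sub_sq hX, hψ.integral_norm_sub_sq hX, hyz, sub_le_sub_iff_left,
    mul_le_mul_iff_right₀ (mul_pos two_pos ha)]

end HasSqInnerKernel

end SqInnerKernel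

section ToE

theorem inner_toE_toE {n : ℕ} (x y : Fin n → ℝ) : ⟪toE x, toE y⟫ = x ⬝ᵥ y :=
  (EuclideanSpace.inner_toLp_toLp x y).trans (dotProduct_comm _ _)

theorem measurable_toE {n : ℕ} : Measurable (toE : (Fin n → ℝ) → EuclideanSpace ℝ (Fin n)) :=
  (EuclideanSpace.equiv (Fin n) ℝ).symm.continuous.measurable

theorem hasSqInnerKernel_F (k : ℕ) :
    HasSqInnerKernel (fun x : EuclideanSpace ℝ (Fin (k + 2)) => toE (F k x x))
      2 (-(2 / ((k : ℝ) + 2))) := fun x y => by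
  change ⟪toE (F k x x), toE (F k y y)⟫ =
    2 * ⟪toE x, toE y⟫ ^ 2 + -(2 / ((k : ℝ) + 2)) * ‖toE x‖ ^ 2 * ‖toE y‖ ^ 2
  simp only [← real_inner_self_eq_norm_sq, inner_toE_toE, F_dotProduct_F]
  ring

end ToE

theorem argmax_inner_sq_eq_argmin_embedded_general (k : ℕ) {Ω : Type*} [MeasurableSpace Ω]
    {μ : Measure Ω} [IsFiniteMeasure μ] {X : Ω → (Fin (k + 2) → ℝ)}
    (hX : MemLp (fun ω => toE (X ω)) 4 μ) {c : ℝ} (hc : c ≠ 0) (r : ℝ) :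
    {y : Fin (k + 2) → ℝ | ‖toE y‖ = r ∧ ∀ z : Fin (k + 2) → ℝ, ‖toE z‖ = r →
        ∫ ω, ⟪toE (X ω), toE z⟫ ^ 2 ∂μ ≤ ∫ ω, ⟪toE (X ω), toE y⟫ ^ 2 ∂μ}
      = {y : Fin (k + 2) → ℝ | ‖toE y‖ = r ∧ ∀ z : Fin (k + 2) → ℝ, ‖toE z‖ = r →
          ∫ ω, ‖c • toE (F k (X ω) (X ω)) - c • toE (F k y y)‖ ^ 2 ∂μ
            ≤ ∫ ω, ‖c • toE (F k (X ω) (X ω)) - c • toE (F k z z)‖ ^ 2 ∂μ} := by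
  have kernel := (hasSqInnerKernel_F k).const_smul c
  have pos_coeff : 0 < c ^ 2 * 2 := by positivity
  ext y
  refine and_congr_right fun hy => forall₂_congr fun z hz => ?_
  exact (kernel.integral_norm_sub_sq_le_iff pos_coeff hX (hy.trans hz.symm)).symm

/-- Let `m ≥ 2` (here `m = k+2`), `r_m = √(2(m+1)/m)`, and let `X` be a random vector in
`ℝ^{m+1}` with `‖X‖ = r_m` almost surely. Then over the sphere `{y : ‖y‖ = r_m}`, the set
of maximizers of `y ↦ E[⟨X,y⟩²]` equals the set of minimizers of `y ↦ E[‖Φ(X) − Φ(y)‖²]`. -/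
theorem argmax_inner_sq_eq_argmin_embedded (k : ℕ) {Ω : Type*} [MeasureSpace Ω]
    [IsProbabilityMeasure (volume : Measure Ω)]
    (X : Ω → (Fin (k + 3) → ℝ)) (hX_meas : Measurable X)
    (hX_norm : ∀ᵐ ω, ‖toE (X ω)‖ = Real.sqrt (2 * ((k : ℝ) + 3) / ((k : ℝ) + 2))) :
    {y : Fin (k + 3) → ℝ | ‖toE y‖ = Real.sqrt (2 * ((k : ℝ) + 3) / ((k : ℝ) + 2)) ∧
        ∀ z : Fin (k + 3) → ℝ, ‖toE z‖ = Real.sqrt (2 * ((k : ℝ) + 3) / ((k : ℝ) + 2)) →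
          (∫ ω, ⟪toE (X ω), toE z⟫^2) ≤ ∫ ω, ⟪toE (X ω), toE y⟫^2}
      = {y : Fin (k + 3) → ℝ | ‖toE y‖ = Real.sqrt (2 * ((k : ℝ) + 3) / ((k : ℝ) + 2)) ∧
          ∀ z : Fin (k + 3) → ℝ, ‖toE z‖ = Real.sqrt (2 * ((k : ℝ) + 3) / ((k : ℝ) + 2)) →
            (∫ ω, ‖Phi k (X ω) - Phi k y‖^2) ≤ ∫ ω, ‖Phi k (X ω) - Phi k z‖^2} := by
  have hX : MemLp (fun ω => toE (X ω)) 4 :=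
    .of_bound (measurable_toE.comp hX_meas).aestronglyMeasurable _ (hX_norm.mono fun _ => le_of_eq)
  exact argmax_inner_sq_eq_argmin_embedded_general (k + 1) hX (by positivity) _
end
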